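/- Let m ≥ 2 be an integer and let a, b, c : ℕ → ℤ be three sequences, each nonnegative, convex (2·x(n) ≤ x(n−1) + x(n+1) for all n ≥ 1), and eventually zero, with a(0) = b(0) = c(0) = m, and assume the balance condition 2m ≤ a(1) + b(1) + c(1). Then there is a permutation (x, y, z) of the triple (a, b, c) for which one of the following holds: (E6) m ≥ 3, x(1), y(1), z(1) ≥ 2 and x(2), y(2), z(2) ≥ 1; or (E7) m ≥ 4, x(1), y(1) ≥ 3, x(2), y(2) ≥ 2, x(3), y(3) ≥ 1 and z(1) ≥ 2; or (E8) m ≥ 6, x(k) ≥ 6 − k for all 0 ≤ k ≤ 6, y(1) ≥ 4, y(2) ≥ 2 and z(1) ≥ 3. -/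

import Mathlib

/-!
Let `p ≤ q ≤ r` be the first drops `m - x 1`, `m - y 1`, `m - z 1` of the three legs, sorted. They
are positive, the balance condition says `p + q + r ≤ m`, and by convexity a leg with first drop `d`
lies above the line `m - n * d`. If `2 * r < m`, all three legs are long enough for `E6`; if
`3 * q < m`, the two longer ones are long enough for `E7`. Otherwise `m / 2 ≤ r` and `m / 3 ≤ q`
leave `p ≤ m / 6`, and the three legs fit `E8`.
-/

/-- A convex sequence: no term after the first exceeds the mean of its two neighbours. The
truncated subtraction `n - 1` is harmless because `1 ≤ n`. -/
def ConvexSeq {R : Type*} [Ring R] [LE R] (x : ℕ → R) : Prop :=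
  ∀ n : ℕ, 1 ≤ n → 2 * x n ≤ x (n - 1) + x (n + 1)

namespace ConvexSeq

variable {R : Type*} [Ring R] [PartialOrder R] [IsOrderedAddMonoid R] {x : ℕ → R}

lemma monotone_sub (hx : ConvexSeq x) : Monotone fun n => x (n + 1) - x n := by
  refine monotone_nat_of_le_succ fun n => ?_
  have hconv : 2 * x (n + 1) ≤ x n + x (n + 1 + 1) := hx (n + 1) n.succ_pos
  rwa [sub_le_sub_iff, ← two_mul, add_comm (x (n + 1 + 1))]

lemma add_mul_sub_le (hx : ConvexSeq x) (n : ℕ) : x 0 + n * (x 1 - x 0) ≤ x n := by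
  induction n with
  | zero => simp
  | succ n ih =>
    calc x 0 + (n + 1 : ℕ) * (x 1 - x 0)
        = x 0 + n * (x 1 - x 0) + (x 1 - x 0) := by
          rw [Nat.cast_succ, add_mul, one_mul, add_assoc]
      _ ≤ x n + (x (n + 1) - x n) := add_le_add ih (hx.monotone_sub n.zero_le)
      _ = x (n + 1) := add_sub_cancel _ _

lemma monotone_of_zero_le_one (hx : ConvexSeq x) (h : x 0 ≤ x 1) : Monotone x :=
  monotone_nat_of_le_succ fun n =>
    sub_nonneg.mp ((sub_nonneg.mpr h).trans (hx.monotone_sub n.zero_le))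

end ConvexSeq

/-- The weights along a leg of a trivalent quiver, read outwards from the trivalent vertex, which
has weight `m`. The leg may be infinite, and its weights may become negative or grow again after the
first step. -/
structure IsDescendingLeg (m : ℤ) (x : ℕ → ℤ) : Prop where
  convex : ConvexSeq x
  zero_eq : x 0 = m
  one_lt : x 1 < m

namespace IsDescendingLeg

variable {m : ℤ} {x : ℕ → ℤ}

lemma of_eventually_zero (hm : 0 < m) (hx : ConvexSeq x)
    (hzero : ∃ N : ℕ, ∀ n : ℕ, N ≤ n → x n = 0) (h0 : x 0 = m) : IsDescendingLeg m x where
  convex := hx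
  zero_eq := h0
  one_lt := by
    obtain ⟨N, hN⟩ := hzero
    by_contra! hle
    have hmono : x 0 ≤ x N := hx.monotone_of_zero_le_one (h0.trans_le hle) N.zero_le
    rw [h0, hN N le_rfl] at hmono
    exact hm.not_ge hmono

lemma sub_mul_le (hx : IsDescendingLeg m x) (n : ℕ) : m - n * (m - x 1) ≤ x n := by
  have hline := hx.convex.add_mul_sub_le n
  rw [hx.zero_eq] at hline
  linarith

lemma sub_add_sub_mul_le (hx : IsDescendingLeg m x) {k N : ℕ} (hk : k ≤ N) :
    (N - k : ℤ) + (m - N * (m - x 1)) ≤ x k := by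
  have hdrop : (N - k : ℤ) ≤ (N - k) * (m - x 1) :=
    le_mul_of_one_le_right (by omega) (by have := hx.one_lt; omega)
  linarith [hx.sub_mul_le k]

lemma sub_le_of_mul_le (hx : IsDescendingLeg m x) {k N : ℕ} (hN : N * (m - x 1) ≤ m)
    (hk : k ≤ N) : (N - k : ℤ) ≤ x k := by
  linarith [hx.sub_add_sub_mul_le hk]

lemma sub_lt_of_mul_lt (hx : IsDescendingLeg m x) {k N : ℕ} (hN : N * (m - x 1) < m)
    (hk : k ≤ N) : (N - k : ℤ) < x k := by
  linarith [hx.sub_add_sub_mul_le hk]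

end IsDescendingLeg

/-- The weights dominate those of the affine `E6` diagram: `3` at the trivalent vertex and `2, 1`
along each leg. -/
def HasAffineE6Pattern (m : ℤ) (x y z : ℕ → ℤ) : Prop :=
  3 ≤ m ∧ 2 ≤ x 1 ∧ 2 ≤ y 1 ∧ 2 ≤ z 1 ∧ 1 ≤ x 2 ∧ 1 ≤ y 2 ∧ 1 ≤ z 2

/-- The weights dominate those of the affine `E7` diagram: `4` at the trivalent vertex, `3, 2, 1`
along the legs `x` and `y`, and `2` on the leg `z`. -/
def HasAffineE7Pattern (m : ℤ) (x y z : ℕ → ℤ) : Prop :=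
  4 ≤ m ∧ 3 ≤ x 1 ∧ 3 ≤ y 1 ∧ 2 ≤ x 2 ∧ 2 ≤ y 2 ∧ 1 ≤ x 3 ∧ 1 ≤ y 3 ∧ 2 ≤ z 1

/-- The weights dominate those of the affine `E8` diagram: `6` at the trivalent vertex,
`5, 4, 3, 2, 1` along the leg `x`, `4, 2` along `y`, and `3` on `z`. -/
def HasAffineE8Pattern (m : ℤ) (x y z : ℕ → ℤ) : Prop :=
  6 ≤ m ∧ (∀ k : ℕ, k ≤ 6 → (6 : ℤ) - (k : ℤ) ≤ x k) ∧ 4 ≤ y 1 ∧ 2 ≤ y 2 ∧ 3 ≤ z 1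

section Patterns

variable {m : ℤ} {x y z : ℕ → ℤ}

lemma hasAffineE6Pattern_of_two_mul_lt (hx : IsDescendingLeg m x) (hy : IsDescendingLeg m y)
    (hz : IsDescendingLeg m z) (hxm : 2 * (m - x 1) < m) (hym : 2 * (m - y 1) < m)
    (hzm : 2 * (m - z 1) < m) : HasAffineE6Pattern m x y z := by
  have hm : 3 ≤ m := by have := hx.one_lt; omega
  exact ⟨hm, hx.sub_lt_of_mul_lt hxm one_le_two, hy.sub_lt_of_mul_lt hym one_le_two,
    hz.sub_lt_of_mul_lt hzm one_le_two, hx.sub_lt_of_mul_lt hxm le_rfl,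
    hy.sub_lt_of_mul_lt hym le_rfl, hz.sub_lt_of_mul_lt hzm le_rfl⟩

lemma hasAffineE7Pattern_of_three_mul_lt (hx : IsDescendingLeg m x) (hy : IsDescendingLeg m y)
    (hxm : 3 * (m - x 1) < m) (hym : 3 * (m - y 1) < m) (hz : 2 ≤ z 1) :
    HasAffineE7Pattern m x y z := by
  have hm : 4 ≤ m := by have := hx.one_lt; omega
  exact ⟨hm, hx.sub_lt_of_mul_lt hxm (by decide), hy.sub_lt_of_mul_lt hym (by decide),
    hx.sub_lt_of_mul_lt hxm (by decide), hy.sub_lt_of_mul_lt hym (by decide),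
    hx.sub_lt_of_mul_lt hxm le_rfl, hy.sub_lt_of_mul_lt hym le_rfl, hz⟩

lemma hasAffineE8Pattern_of_le_mul (hx : IsDescendingLeg m x) (hy : IsDescendingLeg m y)
    (hym : m ≤ 3 * (m - y 1)) (hzm : m ≤ 2 * (m - z 1)) (hbal : 2 * m ≤ x 1 + y 1 + z 1) :
    HasAffineE8Pattern m x y z := by
  have hxm : 6 * (m - x 1) ≤ m := by omega
  have hx1 : x 1 < m := hx.one_lt
  have hy2 : m - 2 * (m - y 1) ≤ y 2 := hy.sub_mul_le 2
  exact ⟨by omega, fun _ hk => hx.sub_le_of_mul_le hxm hk, by omega, by omega, by omega⟩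

lemma hasAffineEPattern_of_sorted (hx : IsDescendingLeg m x) (hy : IsDescendingLeg m y)
    (hz : IsDescendingLeg m z) (hyx : y 1 ≤ x 1) (hzy : z 1 ≤ y 1)
    (hbal : 2 * m ≤ x 1 + y 1 + z 1) :
    HasAffineE6Pattern m x y z ∨ HasAffineE7Pattern m x y z ∨ HasAffineE8Pattern m x y z := by
  by_cases hzm : 2 * (m - z 1) < m
  · exact .inl (hasAffineE6Pattern_of_two_mul_lt hx hy hz (by omega) (by omega) hzm)
  by_cases hym : 3 * (m - y 1) < m
  · have hz1 : 2 ≤ z 1 := by have := hx.one_lt; have := hy.one_lt; omega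
    exact .inr (.inl (hasAffineE7Pattern_of_three_mul_lt hx hy (by omega) hym hz1))
  · exact .inr (.inr (hasAffineE8Pattern_of_le_mul hx hy (not_lt.mp hym) (not_lt.mp hzm) hbal))

end Patterns

lemma exists_triple_eq_and_antitone {α β : Type*} [LinearOrder β] (f : α → β) (a b c : α) :
    ∃ x y z : α, ({x, y, z} : Multiset α) = {a, b, c} ∧ f y ≤ f x ∧ f z ≤ f y := by
  have hperm := List.perm_insertionSort (Order.Preimage f (· ≥ ·)) [a, b, c]
  have hsorted := List.pairwise_insertionSort (Order.Preimage f (· ≥ ·)) [a, b, c]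
  obtain ⟨x, y, z, hxyz⟩ := List.length_eq_three.mp hperm.length_eq
  rw [hxyz] at hperm hsorted
  have hrel := List.isChain_iff_pairwise.mpr hsorted
  simp only [List.isChain_cons_cons, Order.Preimage] at hrel
  exact ⟨x, y, z, Multiset.coe_eq_coe.mpr hperm, hrel.1, hrel.2.1⟩

theorem trivalent_contains_affine_E_pattern_general {m : ℤ} {a b c : ℕ → ℤ}
    (ha : IsDescendingLeg m a) (hb : IsDescendingLeg m b) (hc : IsDescendingLeg m c)
    (hbal : 2 * m ≤ a 1 + b 1 + c 1) :
    ∃ x y z : ℕ → ℤ, ({x, y, z} : Multiset (ℕ → ℤ)) = {a, b, c} ∧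
      (HasAffineE6Pattern m x y z ∨ HasAffineE7Pattern m x y z ∨ HasAffineE8Pattern m x y z) := by
  obtain ⟨x, y, z, hperm, hyx, hzy⟩ := exists_triple_eq_and_antitone (fun w : ℕ → ℤ => w 1) a b c
  have hlegs : ∀ w ∈ ({x, y, z} : Multiset (ℕ → ℤ)), IsDescendingLeg m w := by
    rw [hperm]
    simp [ha, hb, hc]
  have hsum : x 1 + y 1 + z 1 = a 1 + b 1 + c 1 := by
    simpa [add_assoc] using congrArg (fun s => (s.map fun w => w 1).sum) hperm
  exact ⟨x, y, z, hperm, hasAffineEPattern_of_sorted (hlegs x (by simp)) (hlegs y (by simp))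
    (hlegs z (by simp)) hyx hzy (hsum ▸ hbal)⟩

/-- A trivalent good quiver always contains one of the affine E6, E7 or E8
Dynkin weight patterns: for three nonnegative, convex, eventually-zero leg
sequences with common value `m ≥ 2` at the trivalent vertex, satisfying the
balance condition `2m ≤ a 1 + b 1 + c 1`, some permutation `(x, y, z)` of
`(a, b, c)` satisfies the E6, E7 or E8 pattern. -/
theorem trivalent_contains_affine_E_pattern (m : ℤ) (hm : 2 ≤ m) (a b c : ℕ → ℤ)
    (hannonneg : ∀ n : ℕ, 0 ≤ a n)
    (hbnonneg : ∀ n : ℕ, 0 ≤ b n)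
    (hcnonneg : ∀ n : ℕ, 0 ≤ c n)
    (haconv : ∀ n : ℕ, 1 ≤ n → 2 * a n ≤ a (n - 1) + a (n + 1))
    (hbconv : ∀ n : ℕ, 1 ≤ n → 2 * b n ≤ b (n - 1) + b (n + 1))
    (hcconv : ∀ n : ℕ, 1 ≤ n → 2 * c n ≤ c (n - 1) + c (n + 1))
    (hazero : ∃ N : ℕ, ∀ n : ℕ, N ≤ n → a n = 0)
    (hbzero : ∃ N : ℕ, ∀ n : ℕ, N ≤ n → b n = 0)
    (hczero : ∃ N : ℕ, ∀ n : ℕ, N ≤ n → c n = 0)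
    (ha0 : a 0 = m) (hb0 : b 0 = m) (hc0 : c 0 = m)
    (hbal : 2 * m ≤ a 1 + b 1 + c 1) :
    ∃ x y z : ℕ → ℤ,
      ({x, y, z} : Multiset (ℕ → ℤ)) = ({a, b, c} : Multiset (ℕ → ℤ)) ∧
      ((3 ≤ m ∧ 2 ≤ x 1 ∧ 2 ≤ y 1 ∧ 2 ≤ z 1 ∧ 1 ≤ x 2 ∧ 1 ≤ y 2 ∧ 1 ≤ z 2) ∨
       (4 ≤ m ∧ 3 ≤ x 1 ∧ 3 ≤ y 1 ∧ 2 ≤ x 2 ∧ 2 ≤ y 2 ∧ 1 ≤ x 3 ∧ 1 ≤ y 3 ∧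
         2 ≤ z 1) ∨
       (6 ≤ m ∧ (∀ k : ℕ, k ≤ 6 → (6 : ℤ) - (k : ℤ) ≤ x k) ∧ 4 ≤ y 1 ∧
         2 ≤ y 2 ∧ 3 ≤ z 1)) := by
  have hpos : 0 < m := zero_lt_two.trans_le hm
  exact trivalent_contains_affine_E_pattern_general (.of_eventually_zero hpos haconv hazero ha0)
    (.of_eventually_zero hpos hbconv hbzero hb0) (.of_eventually_zero hpos hcconv hczero hc0) hbal
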